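/- ∑_{k=1}^∞ (27/4)^k / (k² · C(3k,k)) = 2π²/3 − 2·(log 2)². -/

import Mathlib

open Real

/-!
Since `1 / ((k + 1) C(3(k+1), k+1))` is the Beta integral `∫₀¹ x ^ k (1 - x) ^ (2(k+1)) dx`, summing
the logarithmic series under the integral turns `∑ z ^ (k+1) / ((k+1)² C(3(k+1), k+1))` into
`-∫₀¹ log (1 - z x (1 - x)²) / x dx`. The maximum of `x (1 - x)²` on `[0, 1]` is `4 / 27`, attained
at `1 / 3`, so at `z = 27 / 4` the argument of the logarithm has a double root and factors as
`(1 - 3 x)² (1 - 3 x / 4)`. The integral is therefore `2 Li₂(3) + Li₂(3/4)` (real parts). One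
functional equation of `Li₂` reduces this to `2 (Li₂(2) + Li₂(1/2)) - (log 2)²`, and the inversion
formula evaluates `Li₂(2) + Li₂(1/2)`.
-/

open MeasureTheory Set

/-- The real part of the dilogarithm `Li₂` on the whole real line, as the integral of
`-log |1 - t| / t` (`Real.log` is even). -/
noncomputable def dilog (x : ℝ) : ℝ := -∫ t in (0 : ℝ)..x, log (1 - t) / t

lemma eq_of_hasDerivAt_zero_off_countable {E : Type*} [NormedAddCommGroup E] [NormedSpace ℝ E]
    [CompleteSpace E] {f : ℝ → E} {S s : Set ℝ} (hS : S.OrdConnected) (hs : s.Countable)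
    (hf : ContinuousOn f S) (hf' : ∀ x ∈ S \ s, HasDerivAt f 0 x) {a b : ℝ}
    (ha : a ∈ S) (hb : b ∈ S) : f a = f b := by
  have hab : uIcc a b ⊆ S := hS.uIcc_subset ha hb
  have hint := integral_eq_of_hasDerivAt_off_countable f 0 hs (hf.mono hab)
    (fun x hx => hf' x ⟨hab (Ioo_subset_Icc_self hx.1), hx.2⟩) intervalIntegrable_const
  simpa [eq_comm, sub_eq_zero] using hint

lemma continuousAt_log_one_sub_div {x : ℝ} (h0 : x ≠ 0) (h1 : x ≠ 1) :
    ContinuousAt (fun t => log (1 - t) / t) x := by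
  have : 1 - x ≠ 0 := sub_ne_zero.2 h1.symm
  fun_prop (disch := assumption)

lemma continuousOn_dslope_log_one_sub : ContinuousOn (dslope (fun t => log (1 - t)) 0) (Iio 1) := by
  refine (continuousOn_dslope (Iio_mem_nhds one_pos)).2 ⟨fun t (ht : t < 1) => ?_, ?_⟩
  · have : 1 - t ≠ 0 := (sub_pos.2 ht).ne'
    fun_prop (disch := assumption)
  · have : (1 : ℝ) - 0 ≠ 0 := by norm_num
    fun_prop (disch := assumption)

lemma intervalIntegrable_log_one_sub_div (a b : ℝ) :
    IntervalIntegrable (fun t => log (1 - t) / t) volume a b := by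
  suffices h : ∀ x : ℝ, IntervalIntegrable (fun t => log (1 - t) / t) volume (1 / 2) x from
    (h a).symm.trans (h b)
  intro x
  rcases le_total x (1 / 2) with hx | hx
  · -- The singularity at `0` is removable: off `0` the integrand is the continuous `dslope`.
    have hsub : uIcc (1 / 2) x ⊆ Iio 1 := by
      rw [uIcc_of_ge hx]
      exact fun t ht => ht.2.trans_lt (by norm_num)
    refine (continuousOn_dslope_log_one_sub.mono hsub).intervalIntegrable.congr_ae ?_
    filter_upwards [Measure.ae_ne (volume.restrict _) 0] with t ht
    simp [dslope_of_ne _ ht, slope_def_field]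
  · have hlog : IntervalIntegrable (fun t : ℝ => log (1 - t)) volume (1 / 2) x := by
      simpa using (intervalIntegral.intervalIntegrable_log'
        (a := 1 - 1 / 2) (b := 1 - x)).comp_sub_left 1
    refine hlog.mul_continuousOn (continuousOn_inv₀.mono fun t ht => ?_)
    rw [uIcc_of_le hx] at ht
    exact (lt_of_lt_of_le (by norm_num) ht.1).ne'

lemma intervalIntegrable_log_one_sub_mul_div (c : ℝ) :
    IntervalIntegrable (fun x => log (1 - c * x) / x) volume 0 1 := by
  rcases eq_or_ne c 0 with rfl | hc
  · simp
  · have h := ((intervalIntegrable_log_one_sub_div 0 c).comp_mul_left (c := c)).const_mul c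
    rw [zero_div, div_self hc] at h
    refine h.congr fun x _ => ?_
    field_simp

lemma dilog_zero : dilog 0 = 0 := by
  simp [dilog]

@[fun_prop]
lemma continuous_dilog : Continuous dilog :=
  (intervalIntegral.continuous_primitive intervalIntegrable_log_one_sub_div 0).neg

lemma hasDerivAt_dilog {x : ℝ} (h0 : x ≠ 0) (h1 : x ≠ 1) :
    HasDerivAt dilog (-(log (1 - x) / x)) x := by
  have hmeas : Measurable fun t : ℝ => log (1 - t) / t := by fun_prop
  exact (intervalIntegral.integral_hasDerivAt_right (intervalIntegrable_log_one_sub_div 0 x)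
    hmeas.stronglyMeasurable.stronglyMeasurableAtFilter
    (continuousAt_log_one_sub_div h0 h1)).neg

lemma integral_log_one_sub_mul_div (c : ℝ) :
    ∫ x in (0 : ℝ)..1, log (1 - c * x) / x = -dilog c := by
  have hscale := intervalIntegral.mul_integral_comp_mul_left (a := 0) (b := 1)
    (f := fun t => log (1 - t) / t) c
  rw [mul_zero, mul_one, ← intervalIntegral.integral_const_mul] at hscale
  rw [dilog, neg_neg, ← hscale]
  refine intervalIntegral.integral_congr fun x _ => ?_
  rcases eq_or_ne c 0 with rfl | hc
  · simp
  · field_simp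

lemma hasSum_integral_pow_div_mul {α : Type*} [MeasurableSpace α] {μ : Measure α} {u w : α → ℝ}
    (hu : AEStronglyMeasurable u μ) (hw : AEStronglyMeasurable w μ) (hu1 : ∀ᵐ x ∂μ, |u x| < 1)
    (hint : Integrable (fun x => log (1 - |u x|) * w x) μ) :
    HasSum (fun k : ℕ => ∫ x, u x ^ (k + 1) / (k + 1) * w x ∂μ)
      (-∫ x, log (1 - u x) * w x ∂μ) := by
  have hbound : ∀ᵐ x ∂μ, HasSum (fun k : ℕ => |u x| ^ (k + 1) / (k + 1) * |w x|)
      (-log (1 - |u x|) * |w x|) := by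
    filter_upwards [hu1] with x hx
    exact (hasSum_pow_div_log_of_abs_lt_one (by rwa [abs_abs])).mul_right _
  rw [← integral_neg]
  refine hasSum_integral_of_dominated_convergence _ (fun k => by fun_prop) (fun k => ?_)
    (hbound.mono fun x hx => hx.summable) ?_ ?_
  · refine .of_forall fun x => le_of_eq ?_
    rw [norm_mul, norm_div, norm_pow, norm_of_nonneg (by positivity : (0 : ℝ) ≤ k + 1)]
    rfl
  · refine hint.norm.congr ?_
    filter_upwards [hbound, hu1] with x hx hx1
    have hlog : log (1 - |u x|) ≤ 0 := log_nonpos (by linarith) (by linarith [abs_nonneg (u x)])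
    rw [hx.tsum_eq, norm_mul, norm_of_nonpos hlog, norm_eq_abs]
  · filter_upwards [hu1] with x hx
    rw [← neg_mul]
    exact (hasSum_pow_div_log_of_abs_lt_one hx).mul_right _

lemma integral_pow_mul_one_sub_pow (m n : ℕ) :
    ∫ x in (0 : ℝ)..1, x ^ m * (1 - x) ^ n =
      (m.factorial * n.factorial : ℝ) / (m + n + 1).factorial := by
  have hbeta : Complex.betaIntegral (m + 1) (n + 1) =
      ((∫ x in (0 : ℝ)..1, x ^ m * (1 - x) ^ n : ℝ) : ℂ) := by
    rw [Complex.betaIntegral, ← intervalIntegral.integral_ofReal]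
    simp
  have hre : ∀ k : ℕ, 0 < (k + 1 : ℂ).re := fun k => by
    simpa using Nat.cast_add_one_pos (α := ℝ) k
  have hGamma := Complex.Gamma_mul_Gamma_eq_betaIntegral (hre m) (hre n)
  rw [show (m + 1 + (n + 1) : ℂ) = (m + n + 1 : ℕ) + 1 by push_cast; ring,
    Complex.Gamma_nat_eq_factorial, Complex.Gamma_nat_eq_factorial,
    Complex.Gamma_nat_eq_factorial, hbeta] at hGamma
  rw [eq_div_iff (by positivity), mul_comm]
  exact_mod_cast hGamma.symm

lemma integral_pow_mul_one_sub_pow_eq_inv_choose (m n : ℕ) :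
    ∫ x in (0 : ℝ)..1, x ^ m * (1 - x) ^ n =
      (((m : ℝ) + 1) * (m + n + 1).choose (m + 1))⁻¹ := by
  have hchoose : ((m + n + 1).choose (m + 1) : ℝ) =
      (m + n + 1).factorial / ((m + 1).factorial * n.factorial) := by
    rw [Nat.cast_choose ℝ (by lia), show m + n + 1 - (m + 1) = n by lia]
  rw [integral_pow_mul_one_sub_pow, hchoose, Nat.factorial_succ m]
  push_cast
  field_simp

lemma integral_pow_succ_div_div (m k : ℕ) (z : ℝ) :
    ∫ x in (0 : ℝ)..1, (z * (x * (1 - x) ^ m)) ^ (k + 1) / (k + 1) / x =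
      z ^ (k + 1) / (((k : ℝ) + 1) ^ 2 * ((m + 1) * (k + 1)).choose (k + 1)) := by
  have hfactor : ∀ x ∈ uIoc (0 : ℝ) 1, (z * (x * (1 - x) ^ m)) ^ (k + 1) / (k + 1) / x =
      z ^ (k + 1) / (k + 1) * (x ^ k * (1 - x) ^ (m * (k + 1))) := by
    intro x hx
    rw [uIoc_of_le zero_le_one] at hx
    have := hx.1.ne'
    rw [mul_pow, mul_pow, ← pow_mul, pow_succ x k]
    field_simp
  rw [intervalIntegral.integral_congr_ae (.of_forall hfactor), intervalIntegral.integral_const_mul,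
    integral_pow_mul_one_sub_pow_eq_inv_choose,
    show k + m * (k + 1) + 1 = (m + 1) * (k + 1) by ring]
  field_simp

lemma hasSum_pow_div_sq_mul_choose (m : ℕ) {z : ℝ}
    (hz : ∀ᵐ x : ℝ, x ∈ Ioc 0 1 → |z| * (x * (1 - x) ^ m) < 1)
    (hint : IntervalIntegrable (fun x => log (1 - |z| * (x * (1 - x) ^ m)) / x) volume 0 1) :
    HasSum (fun k : ℕ => z ^ (k + 1) / (((k : ℝ) + 1) ^ 2 * ((m + 1) * (k + 1)).choose (k + 1)))
      (-∫ x in (0 : ℝ)..1, log (1 - z * (x * (1 - x) ^ m)) / x) := by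
  have habs : ∀ x ∈ Ioc (0 : ℝ) 1, |z * (x * (1 - x) ^ m)| = |z| * (x * (1 - x) ^ m) := by
    intro x hx
    have : 0 ≤ 1 - x := sub_nonneg.2 hx.2
    have := hx.1
    rw [abs_mul, abs_of_nonneg (by positivity : 0 ≤ x * (1 - x) ^ m)]
  have hsum := hasSum_integral_pow_div_mul (μ := volume.restrict (Ioc 0 1))
    (u := fun x => z * (x * (1 - x) ^ m)) (w := fun x => x⁻¹)
    (by fun_prop) (by fun_prop) ?_ ?_
  · simp only [← intervalIntegral.integral_of_le zero_le_one] at hsum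
    simpa only [← div_eq_mul_inv, integral_pow_succ_div_div] using hsum
  · rw [ae_restrict_iff' measurableSet_Ioc]
    filter_upwards [hz] with x hzx hx
    rw [habs x hx]
    exact hzx hx
  · refine ((intervalIntegrable_iff_integrableOn_Ioc_of_le zero_le_one).1 hint).congr_fun
      (fun x hx => ?_) measurableSet_Ioc
    simp only [habs x hx, div_eq_mul_inv]

lemma hasSum_dilog {z : ℝ} (hz : |z| ≤ 1) :
    HasSum (fun k : ℕ => z ^ (k + 1) / ((k : ℝ) + 1) ^ 2) (dilog z) := by
  have hlt : ∀ᵐ x : ℝ, x ∈ Ioc 0 1 → |z| * (x * (1 - x) ^ 0) < 1 := by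
    filter_upwards [Measure.ae_ne volume 1] with x hx1 hx
    have := hx.2.lt_of_ne hx1
    nlinarith [hx.1, abs_nonneg z]
  simpa [integral_log_one_sub_mul_div] using hasSum_pow_div_sq_mul_choose 0 hlt
    (by simpa using intervalIntegrable_log_one_sub_mul_div |z|)

lemma dilog_one : dilog 1 = π ^ 2 / 6 := by
  have hzeta := (hasSum_nat_add_iff' 1).2 hasSum_zeta_two
  exact (hasSum_dilog (by simp)).unique (by simpa using hzeta)

lemma dilog_add_dilog_inv {x : ℝ} (hx : 0 < x) :
    dilog x + dilog x⁻¹ = π ^ 2 / 3 - log x ^ 2 / 2 := by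
  have hconst := eq_of_hasDerivAt_zero_off_countable
    (f := fun y => dilog y + dilog y⁻¹ + log y ^ 2 / 2) (S := Ioi 0) (s := {1})
    ordConnected_Ioi (countable_singleton 1) ?_ ?_ hx (mem_Ioi.2 one_pos)
  · simp only [inv_one, log_one, dilog_one] at hconst
    linarith
  · have hne : ∀ y ∈ Ioi (0 : ℝ), y ≠ 0 := fun y hy => ne_of_gt hy
    fun_prop (disch := assumption)
  · rintro y ⟨hy : 0 < y, hy1 : y ≠ 1⟩
    have hlog : log (1 - y⁻¹) = log (1 - y) - log y := by
      rw [← log_div (sub_ne_zero.2 hy1.symm) hy.ne', ← log_neg_eq_log ((1 - y) / y)]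
      congr 1
      field_simp
      ring
    convert! ((hasDerivAt_dilog hy.ne' hy1).add
      ((hasDerivAt_dilog (inv_ne_zero hy.ne') (inv_ne_one.2 hy1)).comp y
        (hasDerivAt_inv hy.ne'))).add (((hasDerivAt_log hy.ne').pow 2).div_const 2) using 1
    rw [hlog]
    field_simp
    ring

lemma two_mul_dilog_one_add_inv_add_dilog_one_sub_sq {x : ℝ} (hx : 0 < x) :
    2 * dilog (1 + x⁻¹) + dilog (1 - x ^ 2) = 2 * dilog (1 - x) + 2 * dilog 2 - log x ^ 2 := by
  have hconst := eq_of_hasDerivAt_zero_off_countable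
    (f := fun y => 2 * dilog (1 + y⁻¹) + dilog (1 - y ^ 2) - 2 * dilog (1 - y) + log y ^ 2)
    (S := Ioi 0) (s := {1})
    ordConnected_Ioi (countable_singleton 1) ?_ ?_ hx (mem_Ioi.2 one_pos)
  · norm_num [dilog_zero] at hconst
    linarith
  · have hne : ∀ y ∈ Ioi (0 : ℝ), y ≠ 0 := fun y hy => ne_of_gt hy
    fun_prop (disch := assumption)
  · rintro y ⟨hy : 0 < y, hy1 : y ≠ 1⟩
    have hy0 : y ≠ 0 := hy.ne'
    have hsub : 1 - y ≠ 0 := sub_ne_zero.2 hy1.symm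
    have hadd : 1 + y ≠ 0 := by positivity
    have hsq : 1 - y ^ 2 = (1 - y) * (1 + y) := by ring
    have hinv : 1 + y⁻¹ = (1 + y) / y := by field_simp; ring
    have d_inv := (hasDerivAt_dilog (x := 1 + y⁻¹) (by positivity) (by simpa using hy0)).comp y
      ((hasDerivAt_inv hy0).const_add 1)
    have d_sq := (hasDerivAt_dilog (x := 1 - y ^ 2) (by rw [hsq]; positivity)
      (by simpa using hy0)).comp y ((hasDerivAt_pow 2 y).const_sub 1)
    have d_sub := (hasDerivAt_dilog hsub (by simpa using hy0)).comp y
      ((hasDerivAt_id y).const_sub 1)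
    convert! (((d_inv.const_mul 2).add d_sq).sub (d_sub.const_mul 2)).add
      ((hasDerivAt_log hy0).pow 2) using 1
    have hlog_inv : log (1 - (1 + y⁻¹)) = -log y := by
      rw [sub_add_cancel_left, log_neg_eq_log, log_inv]
    have hlog_sq : log (1 - (1 - y ^ 2)) = 2 * log y := by
      rw [sub_sub_cancel, log_pow, Nat.cast_ofNat]
    rw [hlog_inv, hlog_sq, sub_sub_cancel, hsq, hinv]
    field_simp
    ring

lemma two_mul_dilog_three_add_dilog_three_quarters :
    2 * dilog 3 + dilog (3 / 4) = 2 * π ^ 2 / 3 - 2 * log 2 ^ 2 := by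
  have hthree := two_mul_dilog_one_add_inv_add_dilog_one_sub_sq (x := 1 / 2) (by norm_num)
  have htwo := dilog_add_dilog_inv (x := 2) two_pos
  have hlog : log (1 / 2) = -log 2 := by rw [one_div, log_inv]
  norm_num [hlog] at hthree htwo
  linarith


lemma log_one_sub_mul_mul_one_sub_sq {x : ℝ} (h3 : x ≠ 1 / 3) (h4 : x ≠ 4 / 3) :
    log (1 - 27 / 4 * (x * (1 - x) ^ 2)) = 2 * log (1 - 3 * x) + log (1 - 3 / 4 * x) := by
  have hfactor : 1 - 27 / 4 * (x * (1 - x) ^ 2) = (1 - 3 * x) ^ 2 * (1 - 3 / 4 * x) := by ring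
  have h3' : 1 - 3 * x ≠ 0 := fun h => h3 (by linarith)
  have h4' : 1 - 3 / 4 * x ≠ 0 := fun h => h4 (by linarith)
  rw [hfactor, log_mul (pow_ne_zero 2 h3') h4', log_pow, Nat.cast_ofNat]

lemma log_one_sub_mul_mul_one_sub_sq_div_ae_eq :
    (fun x => log (1 - 27 / 4 * (x * (1 - x) ^ 2)) / x) =ᵐ[volume]
      fun x => 2 * (log (1 - 3 * x) / x) + log (1 - 3 / 4 * x) / x := by
  filter_upwards [Measure.ae_ne volume (1 / 3), Measure.ae_ne volume (4 / 3)] with x h3 h4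
  rw [log_one_sub_mul_mul_one_sub_sq h3 h4]
  ring

lemma intervalIntegrable_log_one_sub_mul_mul_one_sub_sq_div :
    IntervalIntegrable (fun x => log (1 - 27 / 4 * (x * (1 - x) ^ 2)) / x) volume 0 1 :=
  (((intervalIntegrable_log_one_sub_mul_div 3).const_mul 2).add
    (intervalIntegrable_log_one_sub_mul_div (3 / 4))).congr_ae
      (ae_restrict_of_ae log_one_sub_mul_mul_one_sub_sq_div_ae_eq.symm)

lemma integral_log_one_sub_mul_mul_one_sub_sq_div :
    ∫ x in (0 : ℝ)..1, log (1 - 27 / 4 * (x * (1 - x) ^ 2)) / x =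
      -(2 * dilog 3 + dilog (3 / 4)) := by
  rw [intervalIntegral.integral_congr_ae
      (log_one_sub_mul_mul_one_sub_sq_div_ae_eq.mono fun x hx _ => hx),
    intervalIntegral.integral_add ((intervalIntegrable_log_one_sub_mul_div 3).const_mul 2)
      (intervalIntegrable_log_one_sub_mul_div (3 / 4)),
    intervalIntegral.integral_const_mul, integral_log_one_sub_mul_div,
    integral_log_one_sub_mul_div]
  ring

lemma hasSum_pow_div_sq_mul_choose_three_mul :
    HasSum (fun k : ℕ => (27 / 4 : ℝ) ^ (k + 1) /
      (((k : ℝ) + 1) ^ 2 * (3 * (k + 1)).choose (k + 1))) (2 * dilog 3 + dilog (3 / 4)) := by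
  have hlt : ∀ᵐ x : ℝ, x ∈ Ioc 0 1 → 27 / 4 * (x * (1 - x) ^ 2) < 1 := by
    filter_upwards [Measure.ae_ne volume (1 / 3)] with x hx3 hx
    have hdouble : 0 < (1 - 3 * x) ^ 2 := pow_two_pos_of_ne_zero fun h => hx3 (by linarith)
    nlinarith [hx.2]
  have habs : |(27 / 4 : ℝ)| = 27 / 4 := abs_of_pos (by norm_num)
  rw [← neg_neg (2 * _ + _), ← integral_log_one_sub_mul_mul_one_sub_sq_div]
  exact hasSum_pow_div_sq_mul_choose 2 (by rwa [habs])
    (by simpa only [habs] using intervalIntegrable_log_one_sub_mul_mul_one_sub_sq_div)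

theorem stmt_1 :
    ∑' k : ℕ, (27/4 : ℝ)^(k+1) / (((k:ℝ)+1)^2 * (((3*(k+1)).choose (k+1) : ℕ) : ℝ)) =
    2*π^2/3 - 2*(Real.log 2)^2 := by
  rw [hasSum_pow_div_sq_mul_choose_three_mul.tsum_eq,
    two_mul_dilog_three_add_dilog_three_quarters]
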